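/- Let G be an unrooted graph with edge set E and let G_k be its k-stretch. Then the number of subtrees of G_k equals Σ_{i,j ≥ 0} t_{i,j}(G) · k^i · C(k+1, 2)^j + k(k−1)|E|/2, where t_{i,j}(G) is the number of subtrees T of G with exactly i external edges having precisely one endvertex in T and j external edges having both endvertices in T. -/

import Mathlib

open scoped Classical

/-- `(S, B)` is a subtree of the graph `G`: `S` is a nonempty vertex set, `B` is a set of
edges of `G` with both endvertices in `S`, and the subgraph `(S, B)` is a tree
(connected with `|B| + 1 = |S|`). -/
def IsSubtree {V : Type*} (G : SimpleGraph V) (S : Finset V) (B : Finset (Sym2 V)) : Prop :=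
  S.Nonempty ∧ (∀ e ∈ B, e ∈ G.edgeSet) ∧ (∀ e ∈ B, ∀ v ∈ e, v ∈ S) ∧
  B.card + 1 = S.card ∧
  ∀ u ∈ S, ∀ v ∈ S, (SimpleGraph.fromEdgeSet (↑B : Set (Sym2 V))).Reachable u v

/-- The number of subtrees of a graph `G`. -/
noncomputable def subtreeCount {V : Type*} (G : SimpleGraph V) : ℕ :=
  {p : Finset V × Finset (Sym2 V) | IsSubtree G p.1 p.2}.ncard

/-- The number of edges of `G` external to the subtree `(S, B)` (i.e. not in `B`) having
exactly `c` endvertices in `S`. -/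
noncomputable def extEdgeCount {V : Type*} (G : SimpleGraph V)
    (S : Finset V) (B : Finset (Sym2 V)) (c : ℕ) : ℕ :=
  {e : Sym2 V | e ∈ G.edgeSet ∧ e ∉ B ∧ {v | v ∈ e ∧ v ∈ S}.ncard = c}.ncard

/-- `t_{i,j}(G)`: the number of subtrees of `G` with exactly `i` external edges having
precisely one endvertex in the subtree and `j` external edges having both endvertices in
the subtree. -/
noncomputable def subtreeCountExt {V : Type*} (G : SimpleGraph V) (i j : ℕ) : ℕ :=
  {p : Finset V × Finset (Sym2 V) |
    IsSubtree G p.1 p.2 ∧ extEdgeCount G p.1 p.2 1 = i ∧ extEdgeCount G p.1 p.2 2 = j}.ncard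

/-- The smaller endpoint of an edge, for a linearly ordered vertex type. -/
def sym2Min {V : Type*} [LinearOrder V] (e : Sym2 V) : V :=
  Sym2.lift ⟨fun a b => min a b, fun a b => min_comm a b⟩ e

/-- The larger endpoint of an edge, for a linearly ordered vertex type. -/
def sym2Max {V : Type*} [LinearOrder V] (e : Sym2 V) : V :=
  Sym2.lift ⟨fun a b => max a b, fun a b => max_comm a b⟩ e

/-- The `k`-stretch of a (simple) graph `G`: every edge is replaced by a path of `k`
edges, realised by inserting `k − 1` new internal vertices for each edge. -/
def stretch {V : Type*} [LinearOrder V] (G : SimpleGraph V) (k : ℕ) :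
    SimpleGraph (V ⊕ (G.edgeSet × Fin (k - 1))) :=
  SimpleGraph.fromRel (fun p q =>
    match p, q with
    | Sum.inl u, Sum.inl v => k = 1 ∧ G.Adj u v
    | Sum.inl u, Sum.inr ei =>
        (u = sym2Min ei.1.val ∧ (ei.2 : ℕ) = 0) ∨
        (u = sym2Max ei.1.val ∧ (ei.2 : ℕ) = k - 2)
    | Sum.inr _, Sum.inl _ => False
    | Sum.inr ei, Sum.inr ej => ei.1 = ej.1 ∧ (ei.2 : ℕ) + 1 = (ej.2 : ℕ))

/-! Root the count at the original vertices. A subtree of `G_k` that meets `V` is obtained from a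
unique subtree `T` of `G`: the path of each edge of `T` is kept whole, and from the path of each
external edge one deletes a nonempty interval of edges (a *gap*), what remains being pendant paths
at the ends that lie in `T`. An external edge with no, one or two ends in `T` thus admits `1`, `k`
or `C(k+1, 2)` gaps. Conversely, retracting the pendant paths onto their ends shows that
connectedness, and the difference between the numbers of vertices and edges, are those of `T`.
A subtree that avoids `V` is a nonempty interval of the `k - 1` inner vertices of one path. -/

section Reachability

variable {W W' : Type*} {B : Set (Sym2 W)} {x y : W}

lemma of_reachable_fromEdgeSet {P : W → Prop} (hP : ∀ x y, s(x, y) ∈ B → P x → P y)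
    (h : (SimpleGraph.fromEdgeSet B).Reachable x y) (hx : P x) : P y := by
  rw [SimpleGraph.reachable_iff_reflTransGen] at h
  induction h with
  | refl => exact hx
  | tail _ hadj ih => exact hP _ _ ((SimpleGraph.fromEdgeSet_adj B).1 hadj).1 ih

lemma reachable_map_of_fromEdgeSet {H : SimpleGraph W'} {f : W → W'}
    (hf : ∀ x y, s(x, y) ∈ B → H.Reachable (f x) (f y))
    (h : (SimpleGraph.fromEdgeSet B).Reachable x y) : H.Reachable (f x) (f y) :=
  of_reachable_fromEdgeSet (P := fun z ↦ H.Reachable (f x) (f z))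
    (fun y z hyz hy ↦ hy.trans (hf y z hyz)) h .rfl

end Reachability

section Cardinalities

lemma card_eq_sum_subtype {α : Type*} [DecidableEq α] {t : Set α} [Fintype t]
    {s : Finset α} (hs : ∀ a ∈ s, a ∈ t) : s.card = ∑ a : t, if a.1 ∈ s then 1 else 0 := by
  rw [← Finset.card_filter, ← Finset.card_image_of_injective _ Subtype.val_injective]
  congr 1
  ext a
  simpa using hs a

lemma card_filter_product_fst_le_snd {α : Type*} [LinearOrder α] (s : Finset α) :
    {q ∈ s ×ˢ s | q.1 ≤ q.2}.card = (s.card + 1).choose 2 := by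
  rw [← Finset.card_sym2]
  refine Finset.card_bij (fun q _ ↦ s(q.1, q.2)) ?_ ?_ ?_
  · rintro ⟨a, b⟩ h
    simpa [Finset.mk_mem_sym2_iff] using (Finset.mem_product.1 (Finset.mem_filter.1 h).1)
  · rintro ⟨a, b⟩ h ⟨a', b'⟩ h' heq
    have hab := (Finset.mem_filter.1 h).2
    have hab' := (Finset.mem_filter.1 h').2
    rcases Sym2.eq_iff.1 heq with ⟨rfl, rfl⟩ | ⟨rfl, rfl⟩
    · rfl
    · exact Prod.ext (le_antisymm hab hab') (le_antisymm hab' hab)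
  · intro z hz
    induction z with | _ a b =>
    rw [Finset.mk_mem_sym2_iff] at hz
    rcases le_total a b with hab | hab
    · exact ⟨(a, b), by simp [hz, hab], rfl⟩
    · exact ⟨(b, a), by simp [hz, hab], Sym2.eq_swap⟩

lemma card_filter_range_lt_or_le {a b : ℕ} (hab : a ≤ b) (n : ℕ) :
    {j ∈ Finset.range n | j < a ∨ b ≤ j}.card = min a n + (n - b) := by
  have hunion : {j ∈ Finset.range n | j < a ∨ b ≤ j} =
      Finset.range (min a n) ∪ Finset.Ico b n := by
    ext
    simp only [Finset.mem_filter, Finset.mem_union, Finset.mem_range, Finset.mem_Ico]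
    omega
  have hdisj : Disjoint (Finset.range (min a n)) (Finset.Ico b n) := by
    simp only [Finset.disjoint_left, Finset.mem_range, Finset.mem_Ico]
    omega
  rw [hunion, Finset.card_union_of_disjoint hdisj, Finset.card_range, Nat.card_Ico]

/-- The pair `(k, k)` stands for the empty span. -/
lemma exists_span_not (P : ℕ → Prop) (k : ℕ) : ∃ q : ℕ × ℕ,
    (q = (k, k) ∨ q.1 ≤ q.2 ∧ q.2 < k ∧ ¬ P q.1 ∧ ¬ P q.2) ∧
      ∀ j < k, j < q.1 ∨ q.2 < j → P j := by
  rcases {j ∈ Finset.range k | ¬ P j}.eq_empty_or_nonempty with hM | hM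
  · refine ⟨(k, k), .inl rfl, fun j hj _ ↦ ?_⟩
    simpa using Finset.filter_eq_empty_iff.1 hM (Finset.mem_range.2 hj)
  · obtain ⟨-, hmin⟩ := Finset.mem_filter.1 (Finset.min'_mem _ hM)
    obtain ⟨hlt, hmax⟩ := Finset.mem_filter.1 (Finset.max'_mem _ hM)
    refine ⟨(_, _), .inr ⟨Finset.min'_le_max' _ hM, Finset.mem_range.1 hlt, hmin, hmax⟩, ?_⟩
    intro j hj hout
    by_contra hP
    have hjM : j ∈ {j ∈ Finset.range k | ¬ P j} := by simp [hj, hP]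
    exact hout.elim (Finset.min'_le _ j hjM).not_gt (Finset.le_max' _ j hjM).not_gt

end Cardinalities

section Endpoints

variable {V : Type*} [LinearOrder V]

lemma mk_sym2Min_sym2Max (e : Sym2 V) : s(sym2Min e, sym2Max e) = e := by
  induction e with | _ a b =>
  rcases le_total a b with h | h <;> simp [sym2Min, sym2Max, h, Sym2.eq_swap]

lemma mem_iff_eq_sym2Min_or_eq_sym2Max {e : Sym2 V} {v : V} :
    v ∈ e ↔ v = sym2Min e ∨ v = sym2Max e := by
  rw [← Sym2.mem_iff, mk_sym2Min_sym2Max]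

variable {G : SimpleGraph V}

lemma adj_sym2Min_sym2Max (e : G.edgeSet) : G.Adj (sym2Min e.1) (sym2Max e.1) := by
  rw [← SimpleGraph.mem_edgeSet, mk_sym2Min_sym2Max]
  exact e.2

lemma ncard_ends_mem (e : G.edgeSet) (S : Finset V) :
    {v | v ∈ e.1 ∧ v ∈ S}.ncard =
      (if sym2Min e.1 ∈ S then 1 else 0) + (if sym2Max e.1 ∈ S then 1 else 0) := by
  have hends : {v | v ∈ e.1 ∧ v ∈ S} =
      ({v ∈ ({sym2Min e.1, sym2Max e.1} : Finset V) | v ∈ S} : Finset V) := by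
    ext v
    simp [mem_iff_eq_sym2Min_or_eq_sym2Max]
  rw [hends, Set.ncard_coe_finset, Finset.card_filter,
    Finset.sum_pair (adj_sym2Min_sym2Max e).ne]

end Endpoints

section Paths

variable {V : Type*} [LinearOrder V]

/-- The vertex at position `j` on the path of `k` edges that replaces `e` in the stretch, counted
from the smaller end of `e`; the positions of the path are `0, …, k`, and larger values of `j`
give the larger end. -/
def pathVertex (G : SimpleGraph V) (k : ℕ) (e : G.edgeSet) : ℕ → V ⊕ (G.edgeSet × Fin (k - 1))
  | 0 => .inl (sym2Min e.1)
  | j + 1 => if h : j < k - 1 then .inr (e, ⟨j, h⟩) else .inl (sym2Max e.1)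

/-- The edge between the positions `j` and `j + 1` on the path that replaces `e`, for `j < k`. -/
def pathEdge (G : SimpleGraph V) (k : ℕ) (e : G.edgeSet) (j : ℕ) :
    Sym2 (V ⊕ (G.edgeSet × Fin (k - 1))) :=
  s(pathVertex G k e j, pathVertex G k e (j + 1))

variable {G : SimpleGraph V} {k : ℕ} {e e' : G.edgeSet} {j j' : ℕ}

lemma pathVertex_zero : pathVertex G k e 0 = .inl (sym2Min e.1) := rfl

lemma pathVertex_last (hk : 0 < k) : pathVertex G k e k = .inl (sym2Max e.1) := by
  obtain ⟨k, rfl⟩ := Nat.exists_eq_succ_of_ne_zero hk.ne'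
  simp [pathVertex]

lemma pathVertex_succ (i : Fin (k - 1)) : pathVertex G k e (i + 1) = .inr (e, i) := by
  simp [pathVertex]

lemma pathVertex_eq_inr (h₀ : 0 < j) (hj : j < k) :
    pathVertex G k e j = .inr (e, ⟨j - 1, by omega⟩) := by
  obtain ⟨j, rfl⟩ := Nat.exists_eq_succ_of_ne_zero h₀.ne'
  exact dif_pos (by omega)

lemma pathVertex_cases (e : G.edgeSet) (hj : j ≤ k) :
    (j = 0 ∧ pathVertex G k e j = .inl (sym2Min e.1)) ∨
    (j = k ∧ pathVertex G k e j = .inl (sym2Max e.1)) ∨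
    ∃ i : Fin (k - 1), j = i + 1 ∧ pathVertex G k e j = .inr (e, i) := by
  rcases j.eq_zero_or_pos with rfl | h₀
  · exact .inl ⟨rfl, rfl⟩
  · rcases hj.lt_or_eq with hlt | rfl
    · exact .inr (.inr ⟨⟨j - 1, by omega⟩, by dsimp only; omega, pathVertex_eq_inr h₀ hlt⟩)
    · exact .inr (.inl ⟨rfl, pathVertex_last h₀⟩)

lemma pathVertex_ne_inl (h₀ : 0 < j) (hj : j < k) (v : V) : pathVertex G k e j ≠ .inl v := by
  simp [pathVertex_eq_inr h₀ hj]

lemma eq_of_pathVertex_eq_of_inner (h₀ : 0 < j) (hj : j < k)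
    (h : pathVertex G k e j = pathVertex G k e' j') : e = e' ∧ j = j' := by
  rw [pathVertex_eq_inr h₀ hj] at h
  cases j' with
  | zero => simp [pathVertex] at h
  | succ i =>
    rw [pathVertex] at h
    split_ifs at h
    simp only [Sum.inr.injEq, Prod.mk.injEq, Fin.mk.injEq] at h
    exact ⟨h.1, by omega⟩

lemma pathVertex_injOn (e : G.edgeSet) : Set.InjOn (pathVertex G k e) (Set.Iic k) := by
  intro j hj j' hj' h
  have hne := (adj_sym2Min_sym2Max e).ne
  rcases pathVertex_cases e hj with ⟨_, hv⟩ | ⟨_, hv⟩ | ⟨_, _, hv⟩ <;>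
    rcases pathVertex_cases e hj' with ⟨_, hv'⟩ | ⟨_, hv'⟩ | ⟨_, _, hv'⟩ <;>
    rw [hv, hv'] at h <;> simp_all

lemma pathVertex_ne_succ (hj : j < k) : pathVertex G k e j ≠ pathVertex G k e (j + 1) :=
  fun h ↦ j.succ_ne_self (pathVertex_injOn e hj.le hj h).symm

lemma eq_of_pathEdge_eq (hj : j < k) (hj' : j' < k) (h : pathEdge G k e j = pathEdge G k e' j') :
    e = e' ∧ j = j' := by
  have he : e = e' := by
    rcases (Nat.succ_le_of_lt (j.zero_le.trans_lt hj)).lt_or_eq with hk | rfl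
    · obtain ⟨m, hm₀, hmk, hm⟩ : ∃ m, 0 < m ∧ m < k ∧ pathVertex G k e m ∈ pathEdge G k e j := by
        rcases j.eq_zero_or_pos with rfl | h₀
        · exact ⟨1, one_pos, hk, Sym2.mem_mk_right _ _⟩
        · exact ⟨j, h₀, hj, Sym2.mem_mk_left _ _⟩
      rw [h, pathEdge, Sym2.mem_iff] at hm
      exact hm.elim (fun hm ↦ (eq_of_pathVertex_eq_of_inner hm₀ hmk hm).1)
        (fun hm ↦ (eq_of_pathVertex_eq_of_inner hm₀ hmk hm).1)
    · obtain rfl : j = 0 := by omega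
      obtain rfl : j' = 0 := by omega
      have hends : s(sym2Min e.1, sym2Max e.1) = s(sym2Min e'.1, sym2Max e'.1) := by
        simpa [pathEdge, pathVertex] using h
      simpa only [mk_sym2Min_sym2Max, Subtype.ext_iff] using hends
  subst he
  refine ⟨rfl, ?_⟩
  rcases Sym2.eq_iff.1 h with ⟨h, -⟩ | ⟨h, h'⟩
  · exact pathVertex_injOn e hj.le hj'.le h
  · have := pathVertex_injOn e hj.le hj' h
    have := pathVertex_injOn e hj hj'.le h'
    omega

lemma stretch_adj_pathVertex (hj : j < k) :
    (stretch G k).Adj (pathVertex G k e j) (pathVertex G k e (j + 1)) := by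
  rw [stretch, SimpleGraph.fromRel_adj]
  refine ⟨pathVertex_ne_succ hj, ?_⟩
  rcases pathVertex_cases e hj.le with ⟨h, hv⟩ | ⟨h, hv⟩ | ⟨i, h, hv⟩ <;>
    rcases pathVertex_cases e hj with ⟨h', hv'⟩ | ⟨h', hv'⟩ | ⟨i', h', hv'⟩ <;>
    rw [hv, hv'] <;> try omega
  · exact .inl ⟨by omega, adj_sym2Min_sym2Max e⟩
  · exact .inl (.inl ⟨rfl, by dsimp only; omega⟩)
  · exact .inr (.inr ⟨rfl, by dsimp only; omega⟩)
  · exact .inl ⟨rfl, by dsimp only; omega⟩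

lemma exists_pathEdge_of_stretch_adj_inl_inr {u : V} {i : Fin (k - 1)}
    (h : (stretch G k).Adj (.inl u) (.inr (e, i))) :
    ∃ j < k, s(.inl u, .inr (e, i)) = pathEdge G k e j := by
  have hi := i.2
  simp only [stretch, SimpleGraph.fromRel_adj, or_false] at h
  rcases h.2 with ⟨rfl, hfirst⟩ | ⟨rfl, hlast⟩
  · exact ⟨0, by omega, by rw [pathEdge, pathVertex_zero, ← pathVertex_succ, hfirst]⟩
  · refine ⟨k - 1, by omega, ?_⟩
    rw [pathEdge, show k - 1 + 1 = k by omega, pathVertex_last (by omega), ← pathVertex_succ,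
      show (i : ℕ) + 1 = k - 1 by omega, Sym2.eq_swap]

lemma exists_pathEdge_of_stretch_adj {x y : V ⊕ (G.edgeSet × Fin (k - 1))}
    (h : (stretch G k).Adj x y) : ∃ e, ∃ j < k, s(x, y) = pathEdge G k e j := by
  rcases x with u | ⟨e, i⟩ <;> rcases y with v | ⟨e', i'⟩
  · obtain ⟨rfl, huv⟩ : k = 1 ∧ G.Adj u v := by
      simpa [stretch, G.adj_comm v u, and_assoc] using h.2
    have hends := congrArg (Sym2.map (Sum.inl (β := G.edgeSet × Fin (1 - 1))))
      (mk_sym2Min_sym2Max s(u, v))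
    exact ⟨⟨s(u, v), huv⟩, 0, one_pos, hends.symm⟩
  · exact ⟨e', exists_pathEdge_of_stretch_adj_inl_inr h⟩
  · rw [Sym2.eq_swap]
    exact ⟨e, exists_pathEdge_of_stretch_adj_inl_inr h.symm⟩
  · have hi := i.2
    have hi' := i'.2
    simp only [stretch, SimpleGraph.fromRel_adj] at h
    rcases h.2 with ⟨rfl, hsucc⟩ | ⟨rfl, hsucc⟩
    · exact ⟨e, i + 1, by omega, by rw [pathEdge, pathVertex_succ, hsucc, pathVertex_succ]⟩
    · refine ⟨e', i' + 1, by omega, ?_⟩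
      rw [pathEdge, pathVertex_succ, hsucc, pathVertex_succ, Sym2.eq_swap]

lemma mem_edgeSet_stretch {z : Sym2 (V ⊕ (G.edgeSet × Fin (k - 1)))} :
    z ∈ (stretch G k).edgeSet ↔ ∃ e, ∃ j < k, z = pathEdge G k e j := by
  constructor
  · induction z with | _ x y => exact exists_pathEdge_of_stretch_adj
  · rintro ⟨e, j, hj, rfl⟩
    exact stretch_adj_pathVertex hj

lemma reachable_pathVertex {B : Set (Sym2 (V ⊕ (G.edgeSet × Fin (k - 1))))} {m n : ℕ}
    (hmn : m ≤ n) (hn : n ≤ k) (h : ∀ j, m ≤ j → j < n → pathEdge G k e j ∈ B) :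
    (SimpleGraph.fromEdgeSet B).Reachable (pathVertex G k e m) (pathVertex G k e n) := by
  induction n, hmn using Nat.le_induction with
  | base => exact .rfl
  | succ n hmn ih =>
    refine (ih (by omega) fun j hm hj ↦ h j hm (by omega)).trans (SimpleGraph.Adj.reachable ?_)
    exact (SimpleGraph.fromEdgeSet_adj B).2 ⟨h n hmn n.lt_succ_self, pathVertex_ne_succ hn⟩

end Paths

section Expansion

variable {V : Type*} [LinearOrder V] {G : SimpleGraph V} {k : ℕ}

/-- The gaps that a subtree of the stretch extending the subgraph `(S, B)` may leave in the path
of `e`: the path edges at the positions `q.1, …, q.2` are absent and the others present. If `e` is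
in `B` its whole path is kept, which is encoded by `(k, k)`, as the path has no edge at
position `k`. -/
noncomputable def edgeGaps (G : SimpleGraph V) (k : ℕ) (S : Finset V) (B : Finset (Sym2 V))
    (e : G.edgeSet) : Finset (ℕ × ℕ) :=
  if e.1 ∈ B then {(k, k)} else
    {q ∈ Finset.range k ×ˢ Finset.range k | q.1 ≤ q.2 ∧
      (sym2Min e.1 ∉ S → q.1 = 0) ∧ (sym2Max e.1 ∉ S → q.2 + 1 = k)}

/-- `(S, B)` is a subgraph of `G`, and `gap` chooses for every edge of `G` a gap that a subtree of
the stretch extending `(S, B)` may leave in its path. -/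
structure IsGapChoice (G : SimpleGraph V) (k : ℕ) (S : Finset V) (B : Finset (Sym2 V))
    (gap : G.edgeSet → ℕ × ℕ) : Prop where
  mem_edgeSet : ∀ e ∈ B, e ∈ G.edgeSet
  mem_verts : ∀ e ∈ B, ∀ v ∈ e, v ∈ S
  mem_edgeGaps : ∀ e, gap e ∈ edgeGaps G k S B e

/-- The retraction of an expanded subgraph onto its original vertices: it maps each inner vertex to
the end of the path to which it is attached. -/
def retract (gap : G.edgeSet → ℕ × ℕ) : V ⊕ (G.edgeSet × Fin (k - 1)) → V :=
  Sum.elim id fun p ↦ if (p.2 : ℕ) < (gap p.1).1 then sym2Min p.1.1 else sym2Max p.1.1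

variable {S : Finset V} {B : Finset (Sym2 V)} {gap : G.edgeSet → ℕ × ℕ} {e : G.edgeSet} {j : ℕ}

namespace IsGapChoice

variable (h : IsGapChoice G k S B gap)
include h

lemma eq_of_mem (he : e.1 ∈ B) : gap e = (k, k) := by
  simpa [edgeGaps, he] using h.mem_edgeGaps e

lemma le_and_lt_of_notMem (he : e.1 ∉ B) : (gap e).1 ≤ (gap e).2 ∧ (gap e).2 < k := by
  have hgap := h.mem_edgeGaps e
  simp only [edgeGaps, he, if_false, Finset.mem_filter, Finset.mem_product,
    Finset.mem_range] at hgap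
  exact ⟨hgap.2.1, hgap.1.2⟩

lemma mem_iff_eq : e.1 ∈ B ↔ gap e = (k, k) := by
  refine ⟨h.eq_of_mem, fun hgap ↦ by_contra fun he ↦ ?_⟩
  simpa [hgap] using h.le_and_lt_of_notMem he

lemma edges_eq {S' : Finset V} {B' : Finset (Sym2 V)} (h' : IsGapChoice G k S' B' gap) :
    B = B' := by
  ext z
  constructor
  · exact fun hz ↦ (h'.mem_iff_eq (e := ⟨z, h.mem_edgeSet z hz⟩)).2 (h.eq_of_mem hz)
  · exact fun hz ↦ (h.mem_iff_eq (e := ⟨z, h'.mem_edgeSet z hz⟩)).2 (h'.eq_of_mem hz)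

lemma fst_le_snd (e : G.edgeSet) : (gap e).1 ≤ (gap e).2 := by
  by_cases he : e.1 ∈ B
  · rw [h.eq_of_mem he]
  · exact (h.le_and_lt_of_notMem he).1

lemma sym2Min_mem (hpos : 0 < (gap e).1) : sym2Min e.1 ∈ S := by
  by_cases he : e.1 ∈ B
  · exact h.mem_verts _ he _ (mem_iff_eq_sym2Min_or_eq_sym2Max.2 (.inl rfl))
  · have hgap := h.mem_edgeGaps e
    simp only [edgeGaps, he, if_false, Finset.mem_filter] at hgap
    exact by_contra fun hS ↦ hpos.ne' (hgap.2.2.1 hS)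

lemma sym2Max_mem (hne : (gap e).2 + 1 ≠ k) : sym2Max e.1 ∈ S := by
  by_cases he : e.1 ∈ B
  · exact h.mem_verts _ he _ (mem_iff_eq_sym2Min_or_eq_sym2Max.2 (.inr rfl))
  · have hgap := h.mem_edgeGaps e
    simp only [edgeGaps, he, if_false, Finset.mem_filter] at hgap
    exact by_contra fun hS ↦ hne (hgap.2.2.2 hS)

lemma card_kept_edges (hk : 0 < k) (e : G.edgeSet) :
    {j ∈ Finset.range k | j < (gap e).1 ∨ (gap e).2 < j}.card =
      (Finset.univ.filter fun i : Fin (k - 1) ↦ (i : ℕ) < (gap e).1 ∨ (gap e).2 ≤ i).card +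
        if e.1 ∈ B then 1 else 0 := by
  have hinner_verts : (Finset.univ.filter fun i : Fin (k - 1) ↦
      (i : ℕ) < (gap e).1 ∨ (gap e).2 ≤ i).card =
        {i ∈ Finset.range (k - 1) | i < (gap e).1 ∨ (gap e).2 ≤ i}.card := by
    simp only [Finset.card_filter]
    exact Fin.sum_univ_eq_sum_range
      (fun i ↦ if i < (gap e).1 ∨ (gap e).2 ≤ i then 1 else 0) (k - 1)
  have hle := h.fst_le_snd e
  have hpath_edges : {j ∈ Finset.range k | j < (gap e).1 ∨ (gap e).2 < j}.card =
      min (gap e).1 k + (k - ((gap e).2 + 1)) :=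
    card_filter_range_lt_or_le (Nat.le_succ_of_le hle) k
  rw [hpath_edges, hinner_verts, card_filter_range_lt_or_le hle]
  split_ifs with he
  · rw [h.eq_of_mem he]
    omega
  · have := h.le_and_lt_of_notMem he
    omega

end IsGapChoice

lemma retract_pathVertex_of_le (hj : j < k) (hle : j ≤ (gap e).1) :
    retract gap (pathVertex G k e j) = sym2Min e.1 := by
  rcases pathVertex_cases e hj.le with ⟨_, hv⟩ | ⟨_, hv⟩ | ⟨i, _, hv⟩ <;> rw [hv]
  · rfl
  · omega
  · exact if_pos (by dsimp only; omega)

lemma retract_pathVertex_of_lt (hj : j ≤ k) (hlt : (gap e).1 < j) :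
    retract gap (pathVertex G k e j) = sym2Max e.1 := by
  rcases pathVertex_cases e hj with ⟨_, hv⟩ | ⟨_, hv⟩ | ⟨i, _, hv⟩ <;> rw [hv]
  · omega
  · rfl
  · exact if_neg (by dsimp only; omega)

variable [Fintype G.edgeSet]

/-- The vertices of the subgraph of the stretch with original vertices `S` and gaps `gap`. The inner
vertex with index `i` lies between the path edges at the positions `i` and `i + 1`, and is kept if
one of them is. -/
noncomputable def expandVerts (k : ℕ) (S : Finset V) (gap : G.edgeSet → ℕ × ℕ) :
    Finset (V ⊕ (G.edgeSet × Fin (k - 1))) :=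
  S.disjSum {p | (p.2 : ℕ) < (gap p.1).1 ∨ (gap p.1).2 ≤ p.2}

/-- The edges of the subgraph of the stretch with gaps `gap`. -/
noncomputable def expandEdges (k : ℕ) (gap : G.edgeSet → ℕ × ℕ) :
    Finset (Sym2 (V ⊕ (G.edgeSet × Fin (k - 1)))) :=
  (Finset.univ.sigma fun e ↦ {j ∈ Finset.range k | j < (gap e).1 ∨ (gap e).2 < j}).image
    fun p ↦ pathEdge G k p.1 p.2

omit [LinearOrder V] in
@[simp]
lemma inl_mem_expandVerts {v : V} : .inl v ∈ expandVerts k S gap ↔ v ∈ S := by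
  simp [expandVerts]

omit [LinearOrder V] in
@[simp]
lemma inr_mem_expandVerts {i : Fin (k - 1)} :
    .inr (e, i) ∈ expandVerts k S gap ↔ (i : ℕ) < (gap e).1 ∨ (gap e).2 ≤ i := by
  simp [expandVerts]

lemma pathEdge_mem_expandEdges (hj : j < k) :
    pathEdge G k e j ∈ expandEdges k gap ↔ j < (gap e).1 ∨ (gap e).2 < j := by
  simp only [expandEdges, Finset.mem_image, Finset.mem_sigma, Finset.mem_univ, true_and,
    Finset.mem_filter, Finset.mem_range]
  constructor
  · rintro ⟨⟨e', j'⟩, ⟨hj', hkept⟩, h⟩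
    obtain ⟨rfl, rfl⟩ := eq_of_pathEdge_eq hj' hj h
    exact hkept
  · exact fun hkept ↦ ⟨⟨e, j⟩, ⟨hj, hkept⟩, rfl⟩

lemma exists_pathEdge_of_mem_expandEdges {z : Sym2 (V ⊕ (G.edgeSet × Fin (k - 1)))}
    (hz : z ∈ expandEdges k gap) :
    ∃ e, ∃ j < k, z = pathEdge G k e j ∧ (j < (gap e).1 ∨ (gap e).2 < j) := by
  obtain ⟨⟨e, j⟩, hp, rfl⟩ := Finset.mem_image.1 hz
  simp only [Finset.mem_sigma, Finset.mem_univ, true_and, Finset.mem_filter,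
    Finset.mem_range] at hp
  exact ⟨e, j, hp.1, rfl, hp.2⟩

lemma reachable_inl_retract (hk : 0 < k) {x : V ⊕ (G.edgeSet × Fin (k - 1))}
    (hx : x ∈ expandVerts k S gap) :
    (SimpleGraph.fromEdgeSet (expandEdges k gap : Set _)).Reachable x (.inl (retract gap x)) := by
  rcases x with v | ⟨e, i⟩
  · exact .rfl
  · have hi := i.2
    rw [inr_mem_expandVerts] at hx
    simp only [retract, Sum.elim_inr]
    rw [← pathVertex_succ]
    split_ifs with hlt
    · rw [← pathVertex_zero (k := k)]
      refine (reachable_pathVertex (by omega) (by omega) fun j _ hj ↦ ?_).symm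
      exact (pathEdge_mem_expandEdges (by omega)).2 (by omega)
    · rw [← pathVertex_last hk]
      refine reachable_pathVertex (by omega) le_rfl fun j _ hj ↦ ?_
      exact (pathEdge_mem_expandEdges (by omega)).2 (by omega)

namespace IsGapChoice

variable (h : IsGapChoice G k S B gap)
include h

lemma pathVertex_mem (hj : j < k) (hkept : j < (gap e).1 ∨ (gap e).2 < j) :
    pathVertex G k e j ∈ expandVerts k S gap ∧ pathVertex G k e (j + 1) ∈ expandVerts k S gap := by
  have hle := h.fst_le_snd e
  have hmin : 0 < (gap e).1 → sym2Min e.1 ∈ S := h.sym2Min_mem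
  have hmax : (gap e).2 + 1 ≠ k → sym2Max e.1 ∈ S := h.sym2Max_mem
  constructor
  · rcases pathVertex_cases e hj.le with ⟨_, hv⟩ | ⟨_, hv⟩ | ⟨i, _, hv⟩ <;> rw [hv]
    · exact inl_mem_expandVerts.2 (hmin (by omega))
    · omega
    · exact inr_mem_expandVerts.2 (by omega)
  · rcases pathVertex_cases e hj with ⟨_, hv⟩ | ⟨_, hv⟩ | ⟨i, _, hv⟩ <;> rw [hv]
    · omega
    · exact inl_mem_expandVerts.2 (hmax (by omega))
    · exact inr_mem_expandVerts.2 (by omega)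

lemma retract_mem {x : V ⊕ (G.edgeSet × Fin (k - 1))} (hx : x ∈ expandVerts k S gap) :
    retract gap x ∈ S := by
  rcases x with v | ⟨e, i⟩
  · exact inl_mem_expandVerts.1 hx
  · rw [inr_mem_expandVerts] at hx
    simp only [retract, Sum.elim_inr]
    split_ifs with hlt
    · exact h.sym2Min_mem (by omega)
    · exact h.sym2Max_mem (by omega)

lemma reachable_retract {x y : V ⊕ (G.edgeSet × Fin (k - 1))}
    (hxy : (SimpleGraph.fromEdgeSet (expandEdges k gap : Set _)).Reachable x y) :
    (SimpleGraph.fromEdgeSet (B : Set (Sym2 V))).Reachable (retract gap x) (retract gap y) := by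
  have hstep : ∀ e, ∀ j < k, (j < (gap e).1 ∨ (gap e).2 < j) →
      (SimpleGraph.fromEdgeSet (B : Set (Sym2 V))).Reachable
        (retract gap (pathVertex G k e j)) (retract gap (pathVertex G k e (j + 1))) := by
    intro e j hj hkept
    have hle := h.fst_le_snd e
    rcases hkept with hlt | hlt
    · rw [retract_pathVertex_of_le hj hlt.le]
      rcases (Nat.succ_le_of_lt hj).lt_or_eq with hinner | hlast
      · rw [retract_pathVertex_of_le hinner hlt]
      · have he : e.1 ∈ B := by
          by_contra he
          have := h.le_and_lt_of_notMem he
          omega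
        rw [show j + 1 = k from hlast, pathVertex_last (by omega)]
        refine SimpleGraph.Adj.reachable ((SimpleGraph.fromEdgeSet_adj _).2 ⟨?_, ?_⟩)
        · rwa [Finset.mem_coe, retract, Sum.elim_inl, id, mk_sym2Min_sym2Max]
        · exact (adj_sym2Min_sym2Max e).ne
    · rw [retract_pathVertex_of_lt hj.le (by omega), retract_pathVertex_of_lt hj (by omega)]
  refine reachable_map_of_fromEdgeSet (fun x y hxy ↦ ?_) hxy
  obtain ⟨e, j, hj, heq, hkept⟩ := exists_pathEdge_of_mem_expandEdges hxy
  rcases Sym2.eq_iff.1 heq with ⟨rfl, rfl⟩ | ⟨rfl, rfl⟩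
  · exact hstep e j hj hkept
  · exact (hstep e j hj hkept).symm

lemma reachable_inl (hk : 0 < k) {u v : V}
    (huv : (SimpleGraph.fromEdgeSet (B : Set (Sym2 V))).Reachable u v) :
    (SimpleGraph.fromEdgeSet
        (expandEdges k gap : Set (Sym2 (V ⊕ (G.edgeSet × Fin (k - 1)))))).Reachable
      (.inl u) (.inl v) := by
  refine reachable_map_of_fromEdgeSet (fun u v huv ↦ ?_) huv
  let e : G.edgeSet := ⟨s(u, v), h.mem_edgeSet _ huv⟩
  have hpath : (SimpleGraph.fromEdgeSet
        (expandEdges k gap : Set (Sym2 (V ⊕ (G.edgeSet × Fin (k - 1)))))).Reachable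
      (.inl (sym2Min e.1)) (.inl (sym2Max e.1)) := by
    rw [← pathVertex_zero (k := k), ← pathVertex_last hk]
    refine reachable_pathVertex (Nat.zero_le k) le_rfl fun j _ hj ↦ ?_
    exact (pathEdge_mem_expandEdges hj).2 (.inl (by rwa [h.eq_of_mem huv]))
  rcases Sym2.eq_iff.1 (mk_sym2Min_sym2Max s(u, v)) with ⟨hu, hv⟩ | ⟨hv, hu⟩
  · rwa [hu, hv] at hpath
  · rw [hu, hv] at hpath
    exact hpath.symm

lemma card_expand (hk : 0 < k) :
    (expandEdges k gap).card + S.card = (expandVerts k S gap).card + B.card := by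
  have hverts : (expandVerts k S gap).card = S.card + ∑ e : G.edgeSet,
      (Finset.univ.filter fun i : Fin (k - 1) ↦ (i : ℕ) < (gap e).1 ∨ (gap e).2 ≤ i).card := by
    simp only [expandVerts, Finset.card_disjSum, Finset.card_filter, Fintype.sum_prod_type]
  have hedges : (expandEdges k gap).card =
      ∑ e, {j ∈ Finset.range k | j < (gap e).1 ∨ (gap e).2 < j}.card := by
    rw [expandEdges, Finset.card_image_of_injOn, Finset.card_sigma]
    rintro ⟨e, j⟩ hp ⟨e', j'⟩ hp' heq
    simp only [Finset.mem_coe, Finset.mem_sigma, Finset.mem_filter, Finset.mem_range] at hp hp'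
    obtain ⟨rfl, rfl⟩ := eq_of_pathEdge_eq hp.2.1 hp'.2.1 heq
    rfl
  rw [hedges, hverts, card_eq_sum_subtype h.mem_edgeSet,
    Finset.sum_congr rfl fun e _ ↦ h.card_kept_edges hk e, Finset.sum_add_distrib]
  omega

lemma isSubtree_expand_iff (hk : 0 < k) :
    IsSubtree (stretch G k) (expandVerts k S gap) (expandEdges k gap) ↔ IsSubtree G S B := by
  have hcard := h.card_expand hk
  constructor
  · rintro ⟨⟨x, hx⟩, -, -, htree, hconn⟩
    refine ⟨⟨_, h.retract_mem hx⟩, h.mem_edgeSet, h.mem_verts, by omega, fun u hu v hv ↦ ?_⟩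
    exact h.reachable_retract (hconn (.inl u) (by simpa) (.inl v) (by simpa))
  · rintro ⟨⟨v, hv⟩, -, -, htree, hconn⟩
    refine ⟨⟨.inl v, by simpa⟩, fun z hz ↦ ?_, fun z hz x hx ↦ ?_, by omega, fun x hx y hy ↦ ?_⟩
    · obtain ⟨e, j, hj, rfl, -⟩ := exists_pathEdge_of_mem_expandEdges hz
      exact mem_edgeSet_stretch.2 ⟨e, j, hj, rfl⟩
    · obtain ⟨e, j, hj, rfl, hkept⟩ := exists_pathEdge_of_mem_expandEdges hz
      rcases Sym2.mem_iff.1 hx with rfl | rfl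
      exacts [(h.pathVertex_mem hj hkept).1, (h.pathVertex_mem hj hkept).2]
    · exact (reachable_inl_retract hk hx).trans <|
        (h.reachable_inl hk (hconn _ (h.retract_mem hx) _ (h.retract_mem hy))).trans
          (reachable_inl_retract hk hy).symm

end IsGapChoice

end Expansion

section Decomposition

variable {V : Type*} [LinearOrder V] {G : SimpleGraph V} {k : ℕ}
  {S : Finset (V ⊕ (G.edgeSet × Fin (k - 1)))} {B : Finset (Sym2 (V ⊕ (G.edgeSet × Fin (k - 1))))}
  (hT : IsSubtree (stretch G k) S B)
include hT

lemma IsSubtree.pathVertex_mem {e : G.edgeSet} {j : ℕ} (hj : pathEdge G k e j ∈ B) :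
    pathVertex G k e j ∈ S ∧ pathVertex G k e (j + 1) ∈ S :=
  ⟨hT.2.2.1 _ hj _ (Sym2.mem_mk_left _ _), hT.2.2.1 _ hj _ (Sym2.mem_mk_right _ _)⟩

lemma IsSubtree.exists_eq_pathVertex {e : G.edgeSet} {a i b : ℕ} (hai : a < i) (hib : i ≤ b)
    (hb : b < k) (haB : pathEdge G k e a ∉ B) (hbB : pathEdge G k e b ∉ B)
    (hi : pathVertex G k e i ∈ S) {x : V ⊕ (G.edgeSet × Fin (k - 1))} (hx : x ∈ S) :
    ∃ j, a < j ∧ j ≤ b ∧ x = pathVertex G k e j := by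
  have ⟨_, hedges, _, _, hconn⟩ := hT
  refine of_reachable_fromEdgeSet (P := fun x ↦ ∃ j, a < j ∧ j ≤ b ∧ x = pathVertex G k e j)
    ?_ (hconn _ hi _ hx) ⟨i, hai, hib, rfl⟩
  rintro x y hxy ⟨j, haj, hjb, rfl⟩
  obtain ⟨e', j', -, heq⟩ := mem_edgeSet_stretch.1 (hedges _ hxy)
  rw [Finset.mem_coe, heq] at hxy
  rcases Sym2.eq_iff.1 heq with ⟨hj, rfl⟩ | ⟨hj, rfl⟩ <;>
    obtain ⟨rfl, rfl⟩ := eq_of_pathVertex_eq_of_inner (by omega) (by omega) hj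
  · have : j ≠ b := fun h ↦ hbB (h ▸ hxy)
    exact ⟨j + 1, by omega, by omega, rfl⟩
  · have : j' ≠ a := fun h ↦ haB (h ▸ hxy)
    exact ⟨j', by omega, by omega, rfl⟩

lemma IsSubtree.pathVertex_notMem {v : V} (hv : .inl v ∈ S) {e : G.edgeSet} {a i b : ℕ}
    (hai : a < i) (hib : i ≤ b) (hb : b < k) (haB : pathEdge G k e a ∉ B)
    (hbB : pathEdge G k e b ∉ B) : pathVertex G k e i ∉ S := fun hi ↦ by
  obtain ⟨j, haj, hjb, hj⟩ := hT.exists_eq_pathVertex hai hib hb haB hbB hi hv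
  exact pathVertex_ne_inl (by omega) (by omega) v hj.symm

lemma IsSubtree.exists_gap {v : V} (hv : .inl v ∈ S) (e : G.edgeSet) :
    ∃ q : ℕ × ℕ, (q = (k, k) ∨ q.1 ≤ q.2 ∧ q.2 < k) ∧
      ∀ j < k, pathEdge G k e j ∈ B ↔ j < q.1 ∨ q.2 < j := by
  obtain ⟨q, hq, hout⟩ := exists_span_not (fun j ↦ pathEdge G k e j ∈ B) k
  refine ⟨q, hq.imp_right fun h ↦ ⟨h.1, h.2.1⟩, fun j hj ↦ ⟨fun hjB ↦ ?_, hout j hj⟩⟩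
  rcases hq with rfl | ⟨-, hlt, haB, hbB⟩
  · exact .inl hj
  · by_contra! hin
    have hne : q.1 ≠ j := fun h ↦ haB (h ▸ hjB)
    exact hT.pathVertex_notMem hv (by omega) hin.2 hlt haB hbB (hT.pathVertex_mem hjB).1

variable {gap : G.edgeSet → ℕ × ℕ}
  (hgap : ∀ e, gap e = (k, k) ∨ (gap e).1 ≤ (gap e).2 ∧ (gap e).2 < k)
  (hB : ∀ e, ∀ j < k, pathEdge G k e j ∈ B ↔ j < (gap e).1 ∨ (gap e).2 < j)
include hB

lemma IsSubtree.expandEdges_eq [Fintype G.edgeSet] : expandEdges k gap = B := by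
  ext z
  constructor
  · intro hz
    obtain ⟨e, j, hj, rfl, hkept⟩ := exists_pathEdge_of_mem_expandEdges hz
    exact (hB e j hj).2 hkept
  · intro hz
    obtain ⟨e, j, hj, rfl⟩ := mem_edgeSet_stretch.1 (hT.2.1 _ hz)
    exact (pathEdge_mem_expandEdges hj).2 ((hB e j hj).1 hz)

include hgap

lemma IsSubtree.expandVerts_eq [Fintype G.edgeSet] {v : V} (hv : .inl v ∈ S) :
    expandVerts k S.toLeft gap = S := by
  ext x
  rcases x with u | ⟨e, i⟩
  · simp
  rw [inr_mem_expandVerts, ← pathVertex_succ]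
  have hi := i.2
  constructor
  · rintro (hlt | hle)
    · exact (hT.pathVertex_mem ((hB e i (by omega)).2 (.inl hlt))).2
    · exact (hT.pathVertex_mem ((hB e (i + 1) (by omega)).2 (.inr (by omega)))).1
  · intro hS
    by_contra! hin
    obtain ⟨hle, hlt⟩ := (hgap e).resolve_left fun h ↦ by simp only [h] at hin; omega
    refine hT.pathVertex_notMem hv (Nat.lt_succ_of_le hin.1) hin.2 hlt ?_ ?_ hS
    · rw [hB e _ (by omega)]
      omega
    · rw [hB e _ hlt]
      omega

lemma IsSubtree.isGapChoice_toLeft [Fintype G.edgeSet] (hk : 0 < k) :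
    IsGapChoice G k S.toLeft
      (({e | gap e = (k, k)} : Finset G.edgeSet).map (Function.Embedding.subtype _)) gap := by
  have hmin : ∀ e, 0 < (gap e).1 → sym2Min e.1 ∈ S.toLeft := fun e h ↦ by
    rw [Finset.mem_toLeft, ← pathVertex_zero (k := k)]
    exact (hT.pathVertex_mem ((hB e 0 hk).2 (.inl h))).1
  have hmax : ∀ e, (gap e).2 + 1 ≠ k → sym2Max e.1 ∈ S.toLeft := fun e h ↦ by
    rw [Finset.mem_toLeft, ← pathVertex_last hk]
    have hlast : pathEdge G k e (k - 1) ∈ B := (hB e _ (by omega)).2 <| by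
      rcases hgap e with h' | h'
      · simp [h', hk]
      · omega
    simpa only [Nat.sub_add_cancel hk] using (hT.pathVertex_mem hlast).2
  refine ⟨fun z hz ↦ ?_, fun z hz v hv ↦ ?_, fun e ↦ ?_⟩
  · obtain ⟨e, -, rfl⟩ := Finset.mem_map.1 hz
    exact e.2
  · obtain ⟨e, he, rfl⟩ := Finset.mem_map.1 hz
    have he : gap e = (k, k) := by simpa using he
    rcases mem_iff_eq_sym2Min_or_eq_sym2Max.1 hv with rfl | rfl
    · exact hmin e (by simpa [he])
    · exact hmax e (by simp [he])
  · by_cases he : gap e = (k, k)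
    · simp [edgeGaps, he]
    · obtain ⟨hle, hlt⟩ := (hgap e).resolve_left he
      have h₁ := hmin e
      have h₂ := hmax e
      simp only [edgeGaps]
      rw [if_neg (by simpa using he)]
      simp only [Finset.mem_filter, Finset.mem_product, Finset.mem_range]
      refine ⟨⟨by omega, hlt⟩, hle, fun h ↦ ?_, fun h ↦ ?_⟩
      · exact by_contra fun h' ↦ h (h₁ (by omega))
      · exact by_contra fun h' ↦ h (h₂ h')

omit hgap hB in
lemma IsSubtree.exists_expand_eq [Fintype G.edgeSet] (hk : 0 < k) {v : V} (hv : .inl v ∈ S) :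
    ∃ S₀ B₀ gap, IsGapChoice G k S₀ B₀ gap ∧
      expandVerts k S₀ gap = S ∧ expandEdges k gap = B := by
  choose gap hgap hB using hT.exists_gap hv
  exact ⟨_, _, gap, hT.isGapChoice_toLeft hgap hB hk, hT.expandVerts_eq hgap hB hv,
    hT.expandEdges_eq hB⟩

end Decomposition

section Injectivity

variable {V : Type*} [LinearOrder V] {G : SimpleGraph V} [Fintype G.edgeSet] {k : ℕ}
  {S S' : Finset V} {B B' : Finset (Sym2 V)} {gap gap' : G.edgeSet → ℕ × ℕ}

lemma IsGapChoice.gap_eq (h : IsGapChoice G k S B gap) (h' : IsGapChoice G k S' B' gap')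
    (hedges : expandEdges k gap = expandEdges k gap') : gap = gap' := by
  funext e
  have hiff : ∀ j < k, (j < (gap e).1 ∨ (gap e).2 < j ↔ j < (gap' e).1 ∨ (gap' e).2 < j) :=
    fun j hj ↦ by rw [← pathEdge_mem_expandEdges hj, hedges, pathEdge_mem_expandEdges hj]
  by_cases he : e.1 ∈ B <;> by_cases he' : e.1 ∈ B'
  · rw [h.eq_of_mem he, h'.eq_of_mem he']
  · obtain ⟨hle', hlt'⟩ := h'.le_and_lt_of_notMem he'
    rw [h.eq_of_mem he] at hiff
    have := hiff _ hlt'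
    omega
  · obtain ⟨hle, hlt⟩ := h.le_and_lt_of_notMem he
    rw [h'.eq_of_mem he'] at hiff
    have := hiff _ hlt
    omega
  · obtain ⟨hle, hlt⟩ := h.le_and_lt_of_notMem he
    obtain ⟨hle', hlt'⟩ := h'.le_and_lt_of_notMem he'
    have h₁ := hiff _ (hle.trans_lt hlt)
    have h₂ := hiff _ hlt
    have h₁' := hiff _ (hle'.trans_lt hlt')
    have h₂' := hiff _ hlt'
    exact Prod.ext (by omega) (by omega)

omit [LinearOrder V] in
lemma eq_of_expandVerts_eq (h : expandVerts k S gap = expandVerts k S' gap') : S = S' := by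
  ext v
  rw [← inl_mem_expandVerts (k := k) (gap := gap), h, inl_mem_expandVerts]

end Injectivity

section Segments

variable {V : Type*} [LinearOrder V] {G : SimpleGraph V} {k : ℕ}

/-- The vertices at the positions `a, …, b` on the path that replaces `e`. -/
noncomputable def segmentVerts (G : SimpleGraph V) (k : ℕ) (e : G.edgeSet) (a b : ℕ) :
    Finset (V ⊕ (G.edgeSet × Fin (k - 1))) :=
  (Finset.Icc a b).image (pathVertex G k e)

/-- The edges between the positions `a` and `b` on the path that replaces `e`. -/
noncomputable def segmentEdges (G : SimpleGraph V) (k : ℕ) (e : G.edgeSet) (a b : ℕ) :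
    Finset (Sym2 (V ⊕ (G.edgeSet × Fin (k - 1)))) :=
  (Finset.Ico a b).image (pathEdge G k e)

variable {e e' : G.edgeSet} {a b a' b' j : ℕ}

lemma card_segmentEdges_add_one (hab : a ≤ b) (hb : b ≤ k) :
    (segmentEdges G k e a b).card + 1 = (segmentVerts G k e a b).card := by
  rw [segmentEdges, segmentVerts, Finset.card_image_of_injOn, Finset.card_image_of_injOn,
    Nat.card_Ico, Nat.card_Icc]
  · omega
  · exact (pathVertex_injOn e).mono fun j hj ↦ (Finset.mem_Icc.1 hj).2.trans hb
  · intro j hj j' hj' h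
    exact (eq_of_pathEdge_eq ((Finset.mem_Ico.1 hj).2.trans_le hb)
      ((Finset.mem_Ico.1 hj').2.trans_le hb) h).2

lemma isSubtree_segment (hab : a ≤ b) (hb : b ≤ k) :
    IsSubtree (stretch G k) (segmentVerts G k e a b) (segmentEdges G k e a b) := by
  refine ⟨(Finset.nonempty_Icc.2 hab).image _, fun z hz ↦ ?_, fun z hz x hx ↦ ?_,
    card_segmentEdges_add_one hab hb, fun x hx y hy ↦ ?_⟩
  · obtain ⟨j, hj, rfl⟩ := Finset.mem_image.1 hz
    exact mem_edgeSet_stretch.2 ⟨e, j, (Finset.mem_Ico.1 hj).2.trans_le hb, rfl⟩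
  · obtain ⟨j, hj, rfl⟩ := Finset.mem_image.1 hz
    rw [Finset.mem_Ico] at hj
    rcases Sym2.mem_iff.1 hx with rfl | rfl <;>
      exact Finset.mem_image_of_mem _ (Finset.mem_Icc.2 (by omega))
  · have hfirst : ∀ x ∈ segmentVerts G k e a b,
        (SimpleGraph.fromEdgeSet (segmentEdges G k e a b : Set (Sym2 _))).Reachable
          (pathVertex G k e a) x := fun x hx ↦ by
      obtain ⟨j, hj, rfl⟩ := Finset.mem_image.1 hx
      obtain ⟨haj, hjb⟩ := Finset.mem_Icc.1 hj
      exact reachable_pathVertex haj (hjb.trans hb) fun i hai hij ↦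
        Finset.mem_image_of_mem _ (Finset.mem_Ico.2 ⟨hai, hij.trans_le hjb⟩)
    exact (hfirst x hx).symm.trans (hfirst y hy)

lemma inl_notMem_segmentVerts (ha : 0 < a) (hb : b < k) (v : V) :
    .inl v ∉ segmentVerts G k e a b := by
  intro hv
  obtain ⟨j, hj, hjv⟩ := Finset.mem_image.1 hv
  rw [Finset.mem_Icc] at hj
  exact pathVertex_ne_inl (by omega) (by omega) v hjv

lemma pathVertex_mem_segmentVerts (h₀ : 0 < j) (hj : j < k) :
    pathVertex G k e j ∈ segmentVerts G k e' a b ↔ e = e' ∧ a ≤ j ∧ j ≤ b := by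
  constructor
  · intro h
    obtain ⟨i, hi, heq⟩ := Finset.mem_image.1 h
    obtain ⟨rfl, rfl⟩ := eq_of_pathVertex_eq_of_inner h₀ hj heq.symm
    exact ⟨rfl, Finset.mem_Icc.1 hi⟩
  · rintro ⟨rfl, hj⟩
    exact Finset.mem_image_of_mem _ (Finset.mem_Icc.2 hj)

lemma eq_of_segmentVerts_eq (ha : 0 < a) (hab : a ≤ b) (hb : b < k)
    (ha' : 0 < a') (hab' : a' ≤ b') (hb' : b' < k)
    (h : segmentVerts G k e a b = segmentVerts G k e' a' b') : e = e' ∧ a = a' ∧ b = b' := by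
  have hiff : ∀ f : G.edgeSet, ∀ j, 0 < j → j < k →
      (f = e ∧ a ≤ j ∧ j ≤ b ↔ f = e' ∧ a' ≤ j ∧ j ≤ b') := fun f j h₀ hj ↦ by
    rw [← pathVertex_mem_segmentVerts h₀ hj, h, pathVertex_mem_segmentVerts h₀ hj]
  obtain ⟨rfl, ha'a, -⟩ := (hiff e a ha (by omega)).1 ⟨rfl, le_rfl, hab⟩
  obtain ⟨-, -, hbb'⟩ := (hiff e b (by omega) hb).1 ⟨rfl, hab, le_rfl⟩
  obtain ⟨-, haa', -⟩ := (hiff e a' ha' (by omega)).2 ⟨rfl, le_rfl, hab'⟩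
  obtain ⟨-, -, hb'b⟩ := (hiff e b' (by omega) hb').2 ⟨rfl, hab', le_rfl⟩
  exact ⟨rfl, by omega, by omega⟩

variable {S : Finset (V ⊕ (G.edgeSet × Fin (k - 1)))}
  {B : Finset (Sym2 (V ⊕ (G.edgeSet × Fin (k - 1))))}
  (hT : IsSubtree (stretch G k) S B) (hS : ∀ v, .inl v ∉ S)
include hT hS

lemma IsSubtree.pathEdge_zero_notMem : pathEdge G k e 0 ∉ B :=
  fun h ↦ hS _ (hT.pathVertex_mem h).1

lemma IsSubtree.pathEdge_last_notMem (hk : 0 < k) : pathEdge G k e (k - 1) ∉ B := fun h ↦ by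
  have hlast := (hT.pathVertex_mem h).2
  rw [Nat.sub_add_cancel hk, pathVertex_last hk] at hlast
  exact hS _ hlast

lemma IsSubtree.exists_span : ∃ e a b, 0 < a ∧ a ≤ b ∧ b < k ∧
    pathVertex G k e a ∈ S ∧ pathVertex G k e b ∈ S ∧ S ⊆ segmentVerts G k e a b := by
  obtain ⟨v | ⟨e, i⟩, hx⟩ := hT.1
  · exact absurd hx (hS v)
  have hi := i.2
  rw [← pathVertex_succ] at hx
  have hpath : ∀ y ∈ S, ∃ j, 0 < j ∧ j ≤ k - 1 ∧ y = pathVertex G k e j := fun y hy ↦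
    hT.exists_eq_pathVertex (Nat.succ_pos _) hi (by omega) (hT.pathEdge_zero_notMem hS)
      (hT.pathEdge_last_notMem hS (by omega)) hx hy
  set M := {j ∈ Finset.Ico 1 k | pathVertex G k e j ∈ S}
  have hmem : ∀ j, j ∈ M ↔ (1 ≤ j ∧ j < k) ∧ pathVertex G k e j ∈ S := fun j ↦ by
    rw [Finset.mem_filter, Finset.mem_Ico]
  have hM : M.Nonempty := ⟨i + 1, (hmem _).2 ⟨by omega, hx⟩⟩
  obtain ⟨ha, haS⟩ := (hmem _).1 (M.min'_mem hM)
  obtain ⟨hb, hbS⟩ := (hmem _).1 (M.max'_mem hM)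
  refine ⟨e, M.min' hM, M.max' hM, ha.1, M.min'_le_max' hM, hb.2, haS, hbS, fun y hy ↦ ?_⟩
  obtain ⟨j, h₀, hj, rfl⟩ := hpath y hy
  have hjM : j ∈ M := (hmem j).2 ⟨by omega, hy⟩
  exact (pathVertex_mem_segmentVerts h₀ (by omega)).2 ⟨rfl, M.min'_le j hjM, M.le_max' j hjM⟩

lemma IsSubtree.exists_segment_eq : ∃ e a b, 0 < a ∧ a ≤ b ∧ b < k ∧
    segmentVerts G k e a b = S ∧ segmentEdges G k e a b = B := by
  obtain ⟨e, a, b, ha, hab, hb, haS, hbS, hsub⟩ := hT.exists_span hS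
  have hedge : ∀ j, a ≤ j → j < b → pathEdge G k e j ∈ B := by
    intro j haj hjb
    by_contra hjB
    obtain ⟨i, _, hij, hbi⟩ :=
      hT.exists_eq_pathVertex ha haj (by omega) (hT.pathEdge_zero_notMem hS) hjB haS hbS
    have hbi := (eq_of_pathVertex_eq_of_inner (by omega) hb hbi).2
    omega
  have hverts : segmentVerts G k e a b = S := by
    refine (Finset.image_subset_iff.2 fun j hj ↦ ?_).antisymm hsub
    obtain ⟨haj, hjb⟩ := Finset.mem_Icc.1 hj
    rcases hjb.lt_or_eq with hlt | rfl
    · exact (hT.pathVertex_mem (hedge j haj hlt)).1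
    · exact hbS
  have hcard := card_segmentEdges_add_one (G := G) (e := e) hab hb.le
  rw [hverts, ← hT.2.2.2.1] at hcard
  refine ⟨e, a, b, ha, hab, hb, hverts, Finset.eq_of_subset_of_card_le ?_ (by omega)⟩
  exact Finset.image_subset_iff.2 fun j hj ↦
    hedge j (Finset.mem_Ico.1 hj).1 (Finset.mem_Ico.1 hj).2

end Segments

section ExternalEdges

variable {V : Type*} [LinearOrder V] {G : SimpleGraph V} {S : Finset V} {B : Finset (Sym2 V)}

lemma card_edgeGaps {k : ℕ} (hk : 0 < k) (e : G.edgeSet) :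
    (edgeGaps G k S B e).card =
      k ^ (if e.1 ∉ B ∧ {v | v ∈ e.1 ∧ v ∈ S}.ncard = 1 then 1 else 0) *
        (k + 1).choose 2 ^ (if e.1 ∉ B ∧ {v | v ∈ e.1 ∧ v ∈ S}.ncard = 2 then 1 else 0) := by
  rw [ncard_ends_mem]
  by_cases he : e.1 ∈ B
  · simp [edgeGaps, he]
  by_cases hmin : sym2Min e.1 ∈ S <;> by_cases hmax : sym2Max e.1 ∈ S
  · simpa [edgeGaps, he, hmin, hmax] using card_filter_product_fst_le_snd (Finset.range k)
  · have hgaps : edgeGaps G k S B e = Finset.range k ×ˢ {k - 1} := by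
      ext q
      simp only [edgeGaps, he, hmin, hmax, if_false, not_true_eq_false, not_false_eq_true,
        false_implies, true_implies, true_and, Finset.mem_filter, Finset.mem_product,
        Finset.mem_range, Finset.mem_singleton]
      omega
    simp [hgaps, he, hmin, hmax]
  · have hgaps : edgeGaps G k S B e = {0} ×ˢ Finset.range k := by
      ext q
      simp only [edgeGaps, he, hmin, hmax, if_false, not_true_eq_false, not_false_eq_true,
        false_implies, true_implies, and_true, Finset.mem_filter, Finset.mem_product,
        Finset.mem_range, Finset.mem_singleton]
      omega
    simp [hgaps, he, hmin, hmax]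
  · have hgaps : edgeGaps G k S B e = {(0, k - 1)} := by
      ext q
      simp only [edgeGaps, he, hmin, hmax, if_false, not_false_eq_true, true_implies,
        Finset.mem_filter, Finset.mem_product, Finset.mem_range, Finset.mem_singleton,
        Prod.ext_iff]
      omega
    simp [hgaps, he, hmin, hmax]

variable [Fintype G.edgeSet]

lemma extEdgeCount_eq_sum (c : ℕ) : extEdgeCount G S B c =
    ∑ e : G.edgeSet, if e.1 ∉ B ∧ {v | v ∈ e.1 ∧ v ∈ S}.ncard = c then 1 else 0 := by
  have himage : {e : Sym2 V | e ∈ G.edgeSet ∧ e ∉ B ∧ {v | v ∈ e ∧ v ∈ S}.ncard = c} =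
      Subtype.val '' (({e | e.1 ∉ B ∧ {v | v ∈ e.1 ∧ v ∈ S}.ncard = c} : Finset G.edgeSet) :
        Set G.edgeSet) := by
    ext z
    simp only [Finset.coe_filter, Finset.mem_univ, true_and, Set.mem_image, Set.mem_ofPred_eq,
      Subtype.exists, exists_and_left, exists_prop, exists_eq_right_right]
    tauto
  rw [extEdgeCount, himage, Set.ncard_image_of_injective _ Subtype.val_injective,
    Set.ncard_coe_finset, Finset.card_filter]

lemma prod_card_edgeGaps {k : ℕ} (hk : 0 < k) : ∏ e, (edgeGaps G k S B e).card =
    k ^ extEdgeCount G S B 1 * (k + 1).choose 2 ^ extEdgeCount G S B 2 := by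
  simp_rw [card_edgeGaps hk, Finset.prod_mul_distrib, Finset.prod_pow_eq_pow_sum,
    extEdgeCount_eq_sum]

end ExternalEdges

section Subtrees

variable {V : Type*} {G : SimpleGraph V}

lemma extEdgeCount_le [Finite G.edgeSet] (S : Finset V) (B : Finset (Sym2 V)) (c : ℕ) :
    extEdgeCount G S B c ≤ G.edgeSet.ncard :=
  Set.ncard_le_ncard fun _ h ↦ h.1

variable [Fintype V]

/-- The subtrees of a finite graph, as a finite set of pairs of a vertex set and an edge set. -/
noncomputable def subtrees (G : SimpleGraph V) : Finset (Finset V × Finset (Sym2 V)) :=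
  {T | IsSubtree G T.1 T.2}

@[simp]
lemma mem_subtrees {T : Finset V × Finset (Sym2 V)} : T ∈ subtrees G ↔ IsSubtree G T.1 T.2 := by
  simp [subtrees]

lemma subtreeCount_eq_card : subtreeCount G = (subtrees G).card := by
  rw [subtreeCount, ← Set.ncard_coe_finset]
  congr 1
  ext T
  simp

lemma subtreeCountExt_eq_card (i j : ℕ) : subtreeCountExt G i j =
    {T ∈ subtrees G | (extEdgeCount G T.1 T.2 1, extEdgeCount G T.1 T.2 2) = (i, j)}.card := by
  rw [subtreeCountExt, ← Set.ncard_coe_finset]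
  congr 1
  ext T
  simp

lemma sum_subtrees_extEdgeCount {M : Type*} [AddCommMonoid M] (f : ℕ → ℕ → M) :
    ∑ T ∈ subtrees G, f (extEdgeCount G T.1 T.2 1) (extEdgeCount G T.1 T.2 2) =
      ∑ i ∈ Finset.range (G.edgeSet.ncard + 1), ∑ j ∈ Finset.range (G.edgeSet.ncard + 1),
        subtreeCountExt G i j • f i j := by
  rw [← Finset.sum_product', ← Finset.sum_fiberwise_of_maps_to
    (g := fun T ↦ (extEdgeCount G T.1 T.2 1, extEdgeCount G T.1 T.2 2))]
  · refine Finset.sum_congr rfl fun ⟨i, j⟩ _ ↦ ?_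
    rw [subtreeCountExt_eq_card, ← Finset.sum_const]
    refine Finset.sum_congr rfl fun T hT ↦ ?_
    obtain ⟨hi, hj⟩ := Prod.mk.inj (Finset.mem_filter.1 hT).2
    rw [hi, hj]
  · intro T _
    simp only [Finset.mem_product, Finset.mem_range, Nat.lt_succ_iff]
    exact ⟨extEdgeCount_le _ _ _, extEdgeCount_le _ _ _⟩

end Subtrees

section Stretch

variable {V : Type*} [Fintype V] [LinearOrder V] (G : SimpleGraph V) [Fintype G.edgeSet] {k : ℕ}

lemma card_subtrees_stretch_meeting (hk : 0 < k) :
    {T ∈ subtrees (stretch G k) | ∃ v, .inl v ∈ T.1}.card =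
      ∑ T ∈ subtrees G,
        k ^ extEdgeCount G T.1 T.2 1 * (k + 1).choose 2 ^ extEdgeCount G T.1 T.2 2 := by
  have hchoice : ∀ p ∈ (subtrees G).sigma fun T ↦ Fintype.piFinset (edgeGaps G k T.1 T.2),
      IsSubtree G p.1.1 p.1.2 ∧ IsGapChoice G k p.1.1 p.1.2 p.2 := fun p hp ↦ by
    obtain ⟨hT, hgap⟩ := Finset.mem_sigma.1 hp
    rw [mem_subtrees] at hT
    exact ⟨hT, hT.2.1, hT.2.2.1, Fintype.mem_piFinset.1 hgap⟩
  simp_rw [← prod_card_edgeGaps hk, ← Fintype.card_piFinset]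
  rw [← Finset.card_sigma]
  symm
  refine Finset.card_bij (fun p _ ↦ (expandVerts k p.1.1 p.2, expandEdges k p.2)) ?_ ?_ ?_
  · intro p hp
    obtain ⟨hT, hgap⟩ := hchoice p hp
    obtain ⟨v, hv⟩ := hT.1
    exact Finset.mem_filter.2 ⟨mem_subtrees.2 ((hgap.isSubtree_expand_iff hk).2 hT), v,
      inl_mem_expandVerts.2 hv⟩
  · rintro ⟨⟨S, B⟩, gap⟩ hp ⟨⟨S', B'⟩, gap'⟩ hp' heq
    have hgap := (hchoice _ hp).2
    have hgap' := (hchoice _ hp').2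
    obtain ⟨hverts, hedges⟩ := Prod.mk.inj heq
    obtain rfl : gap = gap' := hgap.gap_eq hgap' hedges
    obtain rfl : S = S' := eq_of_expandVerts_eq hverts
    obtain rfl : B = B' := hgap.edges_eq hgap'
    rfl
  · rintro ⟨S', B'⟩ hT'
    obtain ⟨hT', v, hv⟩ := Finset.mem_filter.1 hT'
    obtain ⟨S, B, gap, hgap, rfl, rfl⟩ := (mem_subtrees.1 hT').exists_expand_eq hk hv
    refine ⟨⟨(S, B), gap⟩, Finset.mem_sigma.2 ⟨?_, ?_⟩, rfl⟩
    · exact mem_subtrees.2 ((hgap.isSubtree_expand_iff hk).1 (mem_subtrees.1 hT'))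
    · exact Fintype.mem_piFinset.2 hgap.mem_edgeGaps

lemma card_subtrees_stretch_avoiding (hk : 0 < k) :
    {T ∈ subtrees (stretch G k) | ¬ ∃ v, .inl v ∈ T.1}.card =
      k.choose 2 * G.edgeSet.ncard := by
  have hspans : {q ∈ Finset.Ico 1 k ×ˢ Finset.Ico 1 k | q.1 ≤ q.2}.card = k.choose 2 := by
    rw [card_filter_product_fst_le_snd, Nat.card_Ico, Nat.sub_add_cancel hk]
  rw [← Nat.card_coe_set_eq, Nat.card_eq_fintype_card, ← Finset.card_univ, ← hspans, mul_comm,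
    ← Finset.card_product]
  have hmem : ∀ p ∈ (Finset.univ : Finset G.edgeSet) ×ˢ
      {q ∈ Finset.Ico 1 k ×ˢ Finset.Ico 1 k | q.1 ≤ q.2},
      0 < p.2.1 ∧ p.2.1 ≤ p.2.2 ∧ p.2.2 < k := fun p hp ↦ by
    simp only [Finset.mem_product, Finset.mem_filter, Finset.mem_Ico] at hp
    omega
  symm
  refine Finset.card_bij (fun p _ ↦ (segmentVerts G k p.1 p.2.1 p.2.2,
    segmentEdges G k p.1 p.2.1 p.2.2)) ?_ ?_ ?_
  · intro p hp
    obtain ⟨ha, hab, hb⟩ := hmem p hp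
    exact Finset.mem_filter.2 ⟨mem_subtrees.2 (isSubtree_segment hab hb.le),
      not_exists.2 (inl_notMem_segmentVerts ha hb)⟩
  · rintro ⟨e, a, b⟩ hp ⟨e', a', b'⟩ hp' heq
    obtain ⟨ha, hab, hb⟩ := hmem _ hp
    obtain ⟨ha', hab', hb'⟩ := hmem _ hp'
    obtain ⟨rfl, rfl, rfl⟩ :=
      eq_of_segmentVerts_eq ha hab hb ha' hab' hb' (Prod.mk.inj heq).1
    rfl
  · rintro ⟨S, B⟩ hT
    obtain ⟨hT, hS⟩ := Finset.mem_filter.1 hT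
    obtain ⟨e, a, b, ha, hab, hb, rfl, rfl⟩ :=
      (mem_subtrees.1 hT).exists_segment_eq (not_exists.1 hS)
    refine ⟨(e, a, b), ?_, rfl⟩
    simp only [Finset.mem_product, Finset.mem_univ, Finset.mem_filter, Finset.mem_Ico, true_and]
    omega

end Stretch

/-- For a graph `G` with edge set `E` and `k ≥ 1`, the number of
subtrees of the `k`-stretch `G_k` equals
`Σ_{i,j} t_{i,j}(G) k^i C(k+1,2)^j + k(k−1)|E|/2`. -/
theorem subtreeCount_stretch {V : Type*} [Fintype V] [LinearOrder V]
    (G : SimpleGraph V) (k : ℕ) (hk : 1 ≤ k) :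
    subtreeCount (stretch G k) =
      (∑ i ∈ Finset.range (G.edgeSet.ncard + 1),
        ∑ j ∈ Finset.range (G.edgeSet.ncard + 1),
          subtreeCountExt G i j * k ^ i * ((k + 1).choose 2) ^ j) +
        k.choose 2 * G.edgeSet.ncard := by
  calc
    subtreeCount (stretch G k)
      = {T ∈ subtrees (stretch G k) | ∃ v, .inl v ∈ T.1}.card +
          {T ∈ subtrees (stretch G k) | ¬ ∃ v, .inl v ∈ T.1}.card := by
      rw [subtreeCount_eq_card, Finset.card_filter_add_card_filter_not]
    _ = ∑ T ∈ subtrees G,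
            k ^ extEdgeCount G T.1 T.2 1 * (k + 1).choose 2 ^ extEdgeCount G T.1 T.2 2 +
          k.choose 2 * G.edgeSet.ncard := by
      rw [card_subtrees_stretch_meeting G hk, card_subtrees_stretch_avoiding G hk]
    _ = _ := by
      rw [sum_subtrees_extEdgeCount fun i j ↦ k ^ i * (k + 1).choose 2 ^ j]
      simp only [smul_eq_mul, mul_assoc]
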